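/- Let r > 0 be a real number, q ∈ (0,1), Θ ∈ (0,1), and let u be a real number with e^u · q(1-Θ) < 1. For every natural number x, the series ∑_{z=0}^{∞} p_Θ(x, z) · e^{u z} converges and equals ([1-ξ(u)] e^{-u})^r · [1 - Θ ξ(u)]^x, where ξ(u) = (1 - e^u)/(1 - q(1-Θ) e^u). That is, the moment generating function of the transition kernel p_Θ started at x has this closed form. -/

import Mathlib

/-- Transition kernel p_Θ(x, z) = ∑_{y=0}^{min(x,z)}
    Γ(z+r)/((z-y)! Γ(y+r)) · [q(1-Θ)]^{z-y} · [1-q(1-Θ)]^{r+y} · C(x,y) Θ^y (1-Θ)^{x-y}. -/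
noncomputable def pKer (r q Θ : ℝ) (x z : ℕ) : ℝ :=
  ∑ y ∈ Finset.range (min x z + 1),
    Real.Gamma ((z : ℝ) + r) / (((z - y).factorial : ℝ) * Real.Gamma ((y : ℝ) + r)) *
      (q * (1 - Θ)) ^ (z - y) * (1 - q * (1 - Θ)) ^ (r + (y : ℝ)) *
      (x.choose y : ℝ) * Θ ^ y * (1 - Θ) ^ (x - y)

/-!
A step of the kernel started at `x` is a binomial thinning followed by a negative binomial
immigration: `y` of the `x` individuals survive, each with probability `Θ`, and given `y` the
increment `z - y` is negative binomial with size `r + y` and success parameter `p = q (1 - Θ)`.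
By the binomial series, a negative binomial variable of size `a` has generating function `w ^ a` at
`s`, where `w = (1 - p) / (1 - p s)`. Hence survivors contribute `(s w) ^ y` on top of the common
factor `w ^ r`, and averaging over `y` with the binomial theorem gives
`w ^ r (Θ s w + 1 - Θ) ^ x`. At `s = e ^ u` the two bases are `(1 - ξ) e ^ (-u)` and `1 - Θ ξ`.
-/

open Finset

theorem hasSum_ite_le_sub_mul_pow {R : Type*} [Semiring R] [TopologicalSpace R]
    [IsTopologicalSemiring R] {f : ℕ → R} {s g : R} (k : ℕ)
    (hf : HasSum (fun n => f n * s ^ n) g) :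
    HasSum (fun z => (if k ≤ z then f (z - k) else 0) * s ^ z) (g * s ^ k) := by
  rw [← (add_left_injective k).hasSum_iff]
  · simpa [Function.comp_def, pow_add, mul_assoc] using hf.mul_right (s ^ k)
  · intro z hz
    have hzk : ¬k ≤ z := fun hkz => hz ⟨z - k, Nat.sub_add_cancel hkz⟩
    rw [if_neg hzk, zero_mul]

theorem multichoose_eq_ascPochhammer_eval_div {K : Type*} [Field K] [CharZero K] (a : K) (n : ℕ) :
    Ring.multichoose a n = (ascPochhammer K n).eval a / n.factorial := by
  rw [eq_div_iff (Nat.cast_ne_zero.mpr n.factorial_ne_zero), mul_comm, ← nsmul_eq_mul,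
    Ring.factorial_nsmul_multichoose_eq_ascPochhammer, Polynomial.ascPochhammer_smeval_eq_eval]

theorem real_Gamma_nat_add_eq_ascPochhammer_eval_mul {a : ℝ} (ha : ∀ m : ℕ, a ≠ -m) (n : ℕ) :
    Real.Gamma (n + a) = (ascPochhammer ℝ n).eval a * Real.Gamma a := by
  induction n with
  | zero => simp
  | succ n ih =>
    have hna : (n : ℝ) + a ≠ 0 := fun h => ha n (eq_neg_of_add_eq_zero_right h)
    rw [Nat.cast_succ, add_right_comm, Real.Gamma_add_one hna, ih, ascPochhammer_succ_eval]
    ring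

theorem real_Gamma_nat_add_div_eq_multichoose {a : ℝ} (ha : ∀ m : ℕ, a ≠ -m) (n : ℕ) :
    Real.Gamma (n + a) / (n.factorial * Real.Gamma a) = Ring.multichoose a n := by
  rw [real_Gamma_nat_add_eq_ascPochhammer_eval_mul ha, multichoose_eq_ascPochhammer_eval_div,
    mul_div_mul_right _ _ (Real.Gamma_ne_zero ha)]

theorem hasSum_multichoose_mul_pow (a : ℝ) {t : ℝ} (ht : |t| < 1) :
    HasSum (fun n => Ring.multichoose a n * t ^ n) ((1 - t) ^ a)⁻¹ := by
  have hball : t ∈ Metric.eball (0 : ℝ) 1 := by simpa [enorm_eq_nnnorm] using! ht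
  have hsum := (Real.one_div_one_sub_rpow_hasFPowerSeriesOnBall_zero a).hasSum hball
  simpa [Ring.multichoose_eq, mul_comm] using hsum

/-- The weight at `n` of the negative binomial distribution with size `a` and parameter `p`, that
is, the number of successes of probability `p` before the `a`-th failure. The size is any real
number, so the usual `Γ(n + a) / (n! Γ(a))` is written as the multichoose coefficient, which has no
poles. -/
noncomputable def negBinWeight (a p : ℝ) (n : ℕ) : ℝ :=
  Ring.multichoose a n * p ^ n * (1 - p) ^ a

theorem hasSum_negBinWeight_mul_pow (a : ℝ) {p s : ℝ} (hp : p ≤ 1) (hps : |s * p| < 1) :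
    HasSum (fun n => negBinWeight a p n * s ^ n) (((1 - p) / (1 - s * p)) ^ a) := by
  have hden : 0 ≤ 1 - s * p := by linarith [(abs_lt.mp hps).2]
  convert! (hasSum_multichoose_mul_pow a hps).mul_right ((1 - p) ^ a) using 1
  · ext n
    rw [negBinWeight, mul_pow]
    ring
  · rw [Real.div_rpow (sub_nonneg.mpr hp) hden, div_eq_inv_mul]

theorem pKer_eq_sum_binomial_mul_negBinWeight {r : ℝ} (hr : ∀ m : ℕ, r ≠ -m) (q Θ : ℝ)
    (x z : ℕ) :
    pKer r q Θ x z = ∑ y ∈ range (x + 1), Θ ^ y * (1 - Θ) ^ (x - y) * x.choose y *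
      (if y ≤ z then negBinWeight (r + y) (q * (1 - Θ)) (z - y) else 0) := by
  have hrange : range (min x z + 1) = {y ∈ range (x + 1) | y ≤ z} := by
    ext y
    simp only [mem_range, mem_filter]
    omega
  rw [pKer, hrange, sum_filter]
  refine sum_congr rfl fun y _ => ?_
  split_ifs with hyz
  · have hry : ∀ m : ℕ, r + y ≠ -m := fun m h => hr (m + y) (by push_cast; linarith)
    have hz : (z : ℝ) + r = (z - y : ℕ) + (r + y) := by
      rw [Nat.cast_sub hyz]
      ring
    rw [hz, add_comm (y : ℝ) r, real_Gamma_nat_add_div_eq_multichoose hry, negBinWeight]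
    ring
  · rw [mul_zero]

theorem hasSum_pKer_mul_pow {r q Θ s : ℝ} (hr : ∀ m : ℕ, r ≠ -m) (hp : q * (1 - Θ) < 1)
    (hs : |s * (q * (1 - Θ))| < 1) (x : ℕ) :
    HasSum (fun z => pKer r q Θ x z * s ^ z)
      (((1 - q * (1 - Θ)) / (1 - s * (q * (1 - Θ)))) ^ r *
        (Θ * (s * ((1 - q * (1 - Θ)) / (1 - s * (q * (1 - Θ))))) + (1 - Θ)) ^ x) := by
  simp only [pKer_eq_sum_binomial_mul_negBinWeight hr, sum_mul]
  set p := q * (1 - Θ)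
  set w := (1 - p) / (1 - s * p)
  have hw_pos : 0 < w := div_pos (sub_pos.mpr hp) (by linarith [(abs_lt.mp hs).2])
  have hgiven_survivors (y : ℕ) :
      HasSum (fun z => (if y ≤ z then negBinWeight (r + y) p (z - y) else 0) * s ^ z)
        (w ^ (r + y) * s ^ y) :=
    hasSum_ite_le_sub_mul_pow y (hasSum_negBinWeight_mul_pow (r + y) hp.le hs)
  have hmixture := hasSum_sum (s := range (x + 1)) fun y _ =>
    (hgiven_survivors y).mul_left (Θ ^ y * (1 - Θ) ^ (x - y) * x.choose y)
  convert! hmixture using 1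
  · simp only [mul_assoc]
  · rw [add_pow, mul_sum]
    refine sum_congr rfl fun y _ => ?_
    rw [Real.rpow_add_natCast hw_pos.ne', mul_pow, mul_pow]
    ring

theorem pKer_mgf_general {r q Θ u : ℝ} (hr : ∀ m : ℕ, r ≠ -m) (hp : q * (1 - Θ) < 1)
    (hu : |Real.exp u * (q * (1 - Θ))| < 1) (x : ℕ) :
    HasSum (fun z : ℕ => pKer r q Θ x z * Real.exp (u * z))
      (((1 - (1 - Real.exp u) / (1 - q * (1 - Θ) * Real.exp u)) * Real.exp (-u)) ^ r *
        (1 - Θ * ((1 - Real.exp u) / (1 - q * (1 - Θ) * Real.exp u))) ^ x) := by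
  have hpgf := hasSum_pKer_mul_pow hr hp hu x
  have hexp (z : ℕ) : Real.exp (u * z) = Real.exp u ^ z := by rw [mul_comm, Real.exp_nat_mul]
  simp only [hexp, Real.exp_neg, mul_comm _ (Real.exp u)]
  have hs : Real.exp u ≠ 0 := Real.exp_ne_zero u
  set s := Real.exp u
  set p := q * (1 - Θ)
  have hden : 1 - s * p ≠ 0 := by linarith [(abs_lt.mp hu).2]
  have hbase : (1 - (1 - s) / (1 - s * p)) * s⁻¹ = (1 - p) / (1 - s * p) := by
    field_simp
    ring
  have hthinning : 1 - Θ * ((1 - s) / (1 - s * p)) =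
      Θ * (s * ((1 - p) / (1 - s * p))) + (1 - Θ) := by
    field_simp
    ring
  rwa [hbase, hthinning]

/-- Moment generating function of one step of the kernel p_Θ started at x:
    ∑_z p_Θ(x,z) e^{u z} = ([1-ξ(u)] e^{-u})^r [1 - Θ ξ(u)]^x,
    where ξ(u) = (1 - e^u)/(1 - q(1-Θ) e^u), provided e^u q(1-Θ) < 1. -/
theorem pKer_mgf
    (r q Θ u : ℝ) (hr : 0 < r) (hq : q ∈ Set.Ioo (0 : ℝ) 1) (hΘ : Θ ∈ Set.Ioo (0 : ℝ) 1)
    (hu : Real.exp u * (q * (1 - Θ)) < 1) (x : ℕ) :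
    HasSum (fun z : ℕ => pKer r q Θ x z * Real.exp (u * z))
      (((1 - (1 - Real.exp u) / (1 - q * (1 - Θ) * Real.exp u)) * Real.exp (-u)) ^ r *
        (1 - Θ * ((1 - Real.exp u) / (1 - q * (1 - Θ) * Real.exp u))) ^ x) := by
  have hp_pos : 0 < q * (1 - Θ) := mul_pos hq.1 (sub_pos.mpr hΘ.2)
  have hp_lt_one : q * (1 - Θ) < 1 :=
    mul_lt_one_of_nonneg_of_lt_one_left hq.1.le hq.2 (sub_le_self 1 hΘ.1.le)
  have hr_ne (m : ℕ) : r ≠ -m := by linarith [m.cast_nonneg (α := ℝ)]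
  exact pKer_mgf_general hr_ne hp_lt_one
    (by rwa [abs_of_pos (mul_pos (Real.exp_pos u) hp_pos)]) x
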